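/- Every holomorphic vector bundle on ℂP^1 splits as a direct sum of line bundles O(a_1) ⊕ ⋯ ⊕ O(a_r), and the integers a_1 ≥ ⋯ ≥ a_r are uniquely determined (Grothendieck–Birkhoff theorem). -/

import Mathlib

/-!
Let `f` be the clutching function of a bundle `E` of rank `r`. On the circles `|z| = 2` and
`|z| = 1 / 2` one can approximate `f⁻¹` by a Laurent polynomial `p`, so that `f * p = 1 + ε` with
`ε` small there, and a Toeplitz equation solved by contraction then gives a homomorphism
`O(-M)^r → E` that is generically an isomorphism. Taking determinants bounds `∑ i, a i` over all
generic isomorphisms `⨁ O(a i) → E`, and one for which the sum is maximal is an isomorphism: where a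
fibre map has a kernel vector, an automorphism of `⨁ O(a i)` moves it into a single summand, and the
map then extends to the twist of that summand by the degeneracy point.

The integers are unique because there is no nonzero homomorphism `O(s) → O(t)` for `t < s`. If
`b k < a k`, an isomorphism between the two decreasing splittings would have a block of zeros with
rows `i ≥ k` and columns `j ≤ k`, which is too large for an invertible matrix.
-/

open Filter Topology

section Laurent

variable {E : Type*} [NormedAddCommGroup E] [NormedSpace ℂ E]

/-- The `n`-th Laurent coefficient, about `0`, of a function on the punctured plane. -/
noncomputable def laurentCoeff (φ : ℂ → E) (n : ℤ) : E :=
  (2 * Real.pi * Complex.I : ℂ)⁻¹ • ∮ ζ in C(0, 1), ζ ^ (-n - 1) • φ ζ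

theorem laurentCoeff_eq {φ : ℂ → E} (hφ : DifferentiableOn ℂ φ {(0 : ℂ)}ᶜ) {R : ℝ} (hR : 0 < R)
    (n : ℤ) :
    laurentCoeff φ n =
      (2 * Real.pi * Complex.I : ℂ)⁻¹ • ∮ ζ in C(0, R), ζ ^ (-n - 1) • φ ζ := by
  have hψ : DifferentiableOn ℂ (fun ζ => ζ ^ (-n - 1) • φ ζ) {(0 : ℂ)}ᶜ :=
    (differentiableOn_zpow _ _ (Or.inl (by simp))).smul hφ
  have radius_indep : ∀ {r s : ℝ}, 0 < r → r ≤ s →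
      ∮ ζ in C(0, s), ζ ^ (-n - 1) • φ ζ = ∮ ζ in C(0, r), ζ ^ (-n - 1) • φ ζ := by
    refine fun hr h => Complex.circleIntegral_eq_of_differentiable_on_annulus_off_countable hr h
      Set.countable_empty (hψ.continuousOn.mono ?_) fun z hz =>
        hψ.differentiableAt (isOpen_compl_singleton.mem_nhds ?_)
    · rintro z ⟨-, hz⟩ rfl
      exact hz (Metric.mem_ball_self hr)
    · rintro rfl
      exact hz.1.2 (Metric.mem_closedBall_self hr.le)
  rcases le_total R 1 with h | h
  · rw [laurentCoeff, radius_indep hR h]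
  · rw [laurentCoeff, radius_indep one_pos h]

theorem norm_laurentCoeff_le {φ : ℂ → E} (hφ : DifferentiableOn ℂ φ {(0 : ℂ)}ᶜ) {R C : ℝ}
    (hR : 0 < R) (hC : ∀ z, ‖z‖ = R → ‖φ z‖ ≤ C) (n : ℤ) :
    ‖laurentCoeff φ n‖ ≤ C * R ^ (-n) := by
  rw [laurentCoeff_eq hφ hR]
  refine (circleIntegral.norm_two_pi_i_inv_smul_integral_le_of_norm_le_const (C := R ^ (-n - 1) * C)
    hR.le fun z hz => ?_).trans_eq ?_
  · have hz' : ‖z‖ = R := by simpa using hz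
    rw [norm_smul, norm_zpow, hz']
    exact mul_le_mul_of_nonneg_left (hC z hz') (by positivity)
  · rw [zpow_sub_one₀ hR.ne']
    field_simp

theorem norm_laurentCoeff_mul_zpow_le {φ : ℂ → E} (hφ : DifferentiableOn ℂ φ {(0 : ℂ)}ᶜ)
    {R C : ℝ} (hR : 0 < R) (hC : ∀ z, ‖z‖ = 2 * R ∨ ‖z‖ = R / 2 → ‖φ z‖ ≤ C) (n : ℤ) :
    ‖laurentCoeff φ n‖ * R ^ n ≤ C * (1 / 2) ^ n.natAbs := by
  obtain ⟨m, rfl | rfl⟩ := n.eq_nat_or_neg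
  · calc ‖laurentCoeff φ m‖ * R ^ (m : ℤ) ≤ (C * (2 * R) ^ (-(m : ℤ))) * R ^ (m : ℤ) := by
          gcongr
          exact norm_laurentCoeff_le hφ (by positivity) (fun z hz => hC z (Or.inl hz)) _
      _ = C * (1 / 2) ^ (m : ℤ).natAbs := by
          simp only [zpow_neg, zpow_natCast, mul_pow, Int.natAbs_natCast]
          field_simp
          rw [mul_assoc, ← mul_pow]
          norm_num
  · calc ‖laurentCoeff φ (-m)‖ * R ^ (-m : ℤ) ≤ (C * (R / 2) ^ (-(-m : ℤ))) * R ^ (-m : ℤ) := by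
          gcongr
          exact norm_laurentCoeff_le hφ (by positivity) (fun z hz => hC z (Or.inr hz)) _
      _ = C * (1 / 2) ^ (-m : ℤ).natAbs := by
          simp only [neg_neg, zpow_neg, zpow_natCast, div_pow, Int.natAbs_neg, Int.natAbs_natCast,
            one_pow]
          field_simp

theorem hasSum_half_pow_natAbs : HasSum (fun n : ℤ => (1 / 2 : ℝ) ^ n.natAbs) 3 := by
  convert! HasSum.of_nat_of_neg_add_one (f := fun n : ℤ => (1 / 2 : ℝ) ^ n.natAbs) (m := 2)
    (m' := 1) (by simpa using hasSum_geometric_two) ?_ using 1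
  · norm_num
  · convert! hasSum_geometric_two' 1 using 2 with n
    rw [Int.natAbs_neg, ← Nat.cast_succ, Int.natAbs_natCast, pow_succ, div_pow, one_pow]
    ring

theorem exists_norm_le_of_norm_eq {φ : ℂ → E} (hφ : DifferentiableOn ℂ φ {(0 : ℂ)}ᶜ) {a b : ℝ}
    (ha : 0 < a) (hb : 0 < b) : ∃ C, ∀ z, ‖z‖ = a ∨ ‖z‖ = b → ‖φ z‖ ≤ C := by
  obtain ⟨C, hC⟩ := ((isCompact_sphere (0 : ℂ) a).union
    (isCompact_sphere (0 : ℂ) b)).exists_bound_of_continuousOn (f := φ) <|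
      hφ.continuousOn.mono fun z hz h => by
        rw [Set.mem_singleton_iff.1 h] at hz
        simp [ha.ne, hb.ne] at hz
  exact ⟨C, fun z hz => hC z (by simpa using hz)⟩

theorem summable_norm_laurentCoeff {φ : ℂ → E} (hφ : DifferentiableOn ℂ φ {(0 : ℂ)}ᶜ)
    {R : ℝ} (hR : 0 < R) : Summable fun n : ℤ => ‖laurentCoeff φ n‖ * R ^ n := by
  obtain ⟨C, hC⟩ := exists_norm_le_of_norm_eq hφ (a := 2 * R) (b := R / 2) (by positivity)
    (by positivity)
  exact Summable.of_nonneg_of_le (fun n => by positivity)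
    (norm_laurentCoeff_mul_zpow_le hφ hR hC) (hasSum_half_pow_natAbs.summable.mul_left C)

theorem tsum_norm_laurentCoeff_le {φ : ℂ → E}
    (hφ : DifferentiableOn ℂ φ {(0 : ℂ)}ᶜ) {δ : ℝ} (hδ : ∀ z, ‖z‖ = 2 ∨ ‖z‖ = 1 / 2 → ‖φ z‖ ≤ δ) :
    ∑' n, ‖laurentCoeff φ n‖ ≤ 3 * δ := by
  rw [mul_comm, ← hasSum_half_pow_natAbs.tsum_eq, ← tsum_mul_left]
  have h := summable_norm_laurentCoeff hφ one_pos
  have hle := norm_laurentCoeff_mul_zpow_le hφ one_pos (by simpa using hδ)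
  simp only [one_zpow, mul_one] at h hle
  exact h.tsum_le_tsum hle (hasSum_half_pow_natAbs.summable.mul_left _)

theorem coe_toCircle_two_pi (θ : ℝ) :
    (AddCircle.toCircle (θ : AddCircle (2 * Real.pi)) : ℂ) = Complex.exp (θ * Complex.I) := by
  rw [AddCircle.toCircle_apply_mk, div_self Real.two_pi_pos.ne', one_mul, Circle.coe_exp]

theorem fourierCoeff_comp_mul_toCircle [Fact (0 < 2 * Real.pi)] {φ : ℂ → E}
    (hφ : DifferentiableOn ℂ φ {(0 : ℂ)}ᶜ) {R : ℝ} (hR : 0 < R) (n : ℤ) :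
    fourierCoeff (fun x : AddCircle (2 * Real.pi) => φ (R * x.toCircle)) n =
      (R : ℂ) ^ n • laurentCoeff φ n := by
  rw [fourierCoeff_eq_intervalIntegral _ _ 0, laurentCoeff_eq hφ hR, circleIntegral, zero_add,
    ← Complex.coe_smul, ← intervalIntegral.integral_smul, ← intervalIntegral.integral_smul,
    ← intervalIntegral.integral_smul]
  refine intervalIntegral.integral_congr fun θ _ => ?_
  have hexp := Complex.exp_ne_zero (θ * Complex.I)
  have hR' : (R : ℂ) ≠ 0 := by exact_mod_cast hR.ne'
  simp only [deriv_circleMap, circleMap_zero, coe_toCircle_two_pi, fourier_apply,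
    AddCircle.toCircle_zsmul, Circle.coe_zpow, zpow_neg, Circle.coe_inv, smul_smul, mul_zpow,
    zpow_sub_one₀ hR', zpow_sub_one₀ hexp]
  congr 1
  push_cast
  field_simp

theorem hasSum_laurentCoeff_of_complex {φ : ℂ → ℂ} (hφ : DifferentiableOn ℂ φ {(0 : ℂ)}ᶜ) {z : ℂ}
    (hz : z ≠ 0) : HasSum (fun n : ℤ => z ^ n * laurentCoeff φ n) (φ z) := by
  have : Fact (0 < 2 * Real.pi) := ⟨Real.two_pi_pos⟩
  have hR : 0 < ‖z‖ := norm_pos_iff.2 hz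
  let F : C(AddCircle (2 * Real.pi), ℂ) := ⟨fun x => φ (‖z‖ * x.toCircle),
    hφ.continuousOn.comp_continuous (by fun_prop) fun x => by simp [hz]⟩
  have hF : ∀ n, fourierCoeff F n = (‖z‖ : ℂ) ^ n * laurentCoeff φ n :=
    fourierCoeff_comp_mul_toCircle hφ hR
  have hsum : Summable (fourierCoeff F) :=
    .of_norm <| (summable_norm_laurentCoeff hφ hR).congr fun n => by simp [hF, mul_comm]
  have hpolar : (‖z‖ : ℂ) * (AddCircle.toCircle (z.arg : AddCircle (2 * Real.pi)) : ℂ) = z := by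
    rw [coe_toCircle_two_pi, Complex.norm_mul_exp_arg_mul_I]
  convert! has_pointwise_sum_fourier_series_of_summable hsum z.arg using 1
  · ext n
    rw [hF, fourier_apply, AddCircle.toCircle_zsmul, Circle.coe_zpow, smul_eq_mul, mul_right_comm,
      ← mul_zpow, hpolar]
  · exact congr_arg φ hpolar.symm

theorem apply_laurentCoeff [CompleteSpace E] {F : Type*} [NormedAddCommGroup F] [NormedSpace ℂ F]
    [CompleteSpace F] (L : E →L[ℂ] F) {φ : ℂ → E} (hφ : DifferentiableOn ℂ φ {(0 : ℂ)}ᶜ) (n : ℤ) :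
    L (laurentCoeff φ n) = laurentCoeff (fun z => L (φ z)) n := by
  have hint : CircleIntegrable (fun ζ => ζ ^ (-n - 1) • φ ζ) 0 1 := by
    refine (((differentiableOn_zpow _ _ (Or.inl (by simp))).smul hφ).continuousOn.mono
      fun ζ hζ h => ?_).circleIntegrable zero_le_one
    simp [Set.mem_singleton_iff.1 h] at hζ
  simp only [laurentCoeff, circleIntegral, map_smul]
  rw [← L.intervalIntegral_comp_comm hint.out]
  simp only [map_smul]

theorem hasSum_laurentCoeff [CompleteSpace E] {φ : ℂ → E}
    (hφ : DifferentiableOn ℂ φ {(0 : ℂ)}ᶜ) {z : ℂ} (hz : z ≠ 0) :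
    HasSum (fun n : ℤ => z ^ n • laurentCoeff φ n) (φ z) := by
  have hsum : Summable fun n : ℤ => z ^ n • laurentCoeff φ n :=
    Summable.of_norm ((summable_norm_laurentCoeff hφ (norm_pos_iff.2 hz)).congr fun n => by
      rw [norm_smul, norm_zpow, mul_comm])
  suffices h : ∑' n : ℤ, z ^ n • laurentCoeff φ n = φ z from h ▸ hsum.hasSum
  refine (SeparatingDual.eq_iff_forall_dual_eq (R := ℂ)).2 fun ℓ => ?_
  rw [ℓ.map_tsum hsum]
  simp only [map_smul, apply_laurentCoeff ℓ hφ, smul_eq_mul]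
  exact (hasSum_laurentCoeff_of_complex (ℓ.differentiable.comp_differentiableOn hφ) hz).tsum_eq

theorem exists_laurentPolynomial_approx [CompleteSpace E] {φ : ℂ → E}
    (hφ : DifferentiableOn ℂ φ {(0 : ℂ)}ᶜ) {a b δ : ℝ} (ha : 0 < a) (hb : 0 < b) (hδ : 0 < δ) :
    ∃ (M : ℕ) (q : ℂ → E), Differentiable ℂ q ∧
      ∀ z, ‖z‖ = a ∨ ‖z‖ = b → ‖φ z - z ^ M • q z⁻¹‖ < δ := by
  have hu : TendstoUniformlyOn (fun (t : Finset ℤ) z => ∑ n ∈ t, z ^ n • laurentCoeff φ n)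
      (fun z => ∑' n : ℤ, z ^ n • laurentCoeff φ n) atTop {z : ℂ | ‖z‖ = a ∨ ‖z‖ = b} := by
    refine tendstoUniformlyOn_tsum
      ((summable_norm_laurentCoeff hφ ha).add (summable_norm_laurentCoeff hφ hb)) ?_
    rintro n z (hz | hz) <;> rw [norm_smul, norm_zpow, hz, mul_comm]
    · exact le_add_of_nonneg_right (by positivity)
    · exact le_add_of_nonneg_left (by positivity)
  obtain ⟨t, ht⟩ := (Metric.tendstoUniformlyOn_iff.1 hu δ hδ).exists
  refine ⟨t.sup Int.natAbs,
    fun w => ∑ n ∈ t, w ^ (t.sup Int.natAbs - n : ℤ).toNat • laurentCoeff φ n, by fun_prop,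
    fun z hz => ?_⟩
  have hz0 : z ≠ 0 := by
    rintro rfl
    rcases hz with hz | hz <;> simp [ha.ne, hb.ne] at hz
  have hpoly : z ^ t.sup Int.natAbs • ∑ n ∈ t, z⁻¹ ^ (t.sup Int.natAbs - n : ℤ).toNat •
      laurentCoeff φ n = ∑ n ∈ t, z ^ n • laurentCoeff φ n := by
    rw [Finset.smul_sum]
    refine Finset.sum_congr rfl fun n hn => ?_
    have hle : n ≤ t.sup Int.natAbs := by
      have := Finset.le_sup (f := Int.natAbs) hn
      omega
    rw [smul_smul, ← zpow_natCast, ← zpow_natCast, Int.toNat_of_nonneg (by omega), inv_zpow',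
      ← zpow_add₀ hz0, neg_sub, add_sub_cancel]
  rw [hpoly, ← (hasSum_laurentCoeff hφ hz0).tsum_eq, ← dist_eq_norm]
  exact ht z hz

theorem summable_norm_inv_pow_smul {x : ℕ → E} {K : ℝ} (hx : ∀ m, ‖x m‖ ≤ K) {z : ℂ}
    (hz : 1 < ‖z‖) :
    Summable fun m : ℕ => ‖z⁻¹ ^ m • x m‖ := by
  refine .of_nonneg_of_le (fun _ => norm_nonneg _) (fun m => ?_)
    ((summable_geometric_of_lt_one (by positivity) (inv_lt_one_of_one_lt₀ hz)).mul_right K)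
  rw [norm_smul, norm_pow, norm_inv]
  gcongr
  exact hx m

theorem differentiableOn_tsum_pow_smul [CompleteSpace E] {c : ℕ → E} {z₀ : ℂ}
    (hc : BddAbove (Set.range fun n => ‖z₀ ^ n • c n‖)) :
    DifferentiableOn ℂ (fun z : ℂ => ∑' n : ℕ, z ^ n • c n) (Metric.ball 0 ‖z₀‖) := by
  rcases eq_or_ne z₀ 0 with rfl | hz₀
  · simp only [norm_zero, Metric.ball_zero, differentiableOn_empty]
  let p : FormalMultilinearSeries ℂ ℂ E :=
    fun n => ContinuousMultilinearMap.mkPiRing ℂ (Fin n) (c n)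
  have hsum : p.sum = fun z => ∑' n : ℕ, z ^ n • c n := by
    ext z
    simp [p, FormalMultilinearSeries.sum]
  obtain ⟨C, hC⟩ := hc
  have hp : (‖z₀‖₊ : ENNReal) ≤ p.radius := p.le_radius_of_bound C fun n => by
    simpa [p, norm_smul, mul_comm] using hC ⟨n, rfl⟩
  have hpos : 0 < (‖z₀‖₊ : ENNReal) := by simpa using hz₀
  have := ((p.hasFPowerSeriesOnBall (hpos.trans_le hp)).mono hpos hp).differentiableOn
  rwa [Metric.eball_coe, coe_nnnorm, hsum] at this

theorem differentiableOn_comp_inv {φ : ℂ → E} (hφ : DifferentiableOn ℂ φ {(0 : ℂ)}ᶜ) :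
    DifferentiableOn ℂ (fun w => φ w⁻¹) {(0 : ℂ)}ᶜ :=
  hφ.comp differentiableOn_inv fun w hw => by simpa using hw

theorem exists_entire_of_eq_on_ball {φ ψ : ℂ → E} {r : ℝ} (hr : 0 < r)
    (hφ : DifferentiableOn ℂ φ (Metric.ball 0 r)) (hψ : DifferentiableOn ℂ ψ {(0 : ℂ)}ᶜ)
    (h : ∀ w, w ≠ 0 → ‖w‖ < r → φ w = ψ w) :
    ∃ χ : ℂ → E, Differentiable ℂ χ ∧ ∀ w, w ≠ 0 → χ w = ψ w := by
  refine ⟨Function.update ψ 0 (φ 0), fun z => ?_, fun w hw => Function.update_of_ne hw _ _⟩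
  by_cases hz : z = 0
  · subst hz
    have hball := Metric.ball_mem_nhds (0 : ℂ) hr
    refine (hφ.differentiableAt hball).congr_of_eventuallyEq ?_
    filter_upwards [hball] with w hw
    rcases eq_or_ne w 0 with rfl | hw0
    · exact Function.update_self ..
    · rw [Function.update_of_ne hw0, h w hw0 (mem_ball_zero_iff.1 hw)]
  · have hmem := isOpen_compl_singleton.mem_nhds hz
    refine (hψ.differentiableAt hmem).congr_of_eventuallyEq ?_
    filter_upwards [hmem] with w hw using Function.update_of_ne hw _ _

end Laurent

section Toeplitz

variable {A : Type*} [NormedRing A]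

theorem isUnit_one_add_of_norm_lt_one [CompleteSpace A] {a : A} (ha : ‖a‖ < 1) :
    IsUnit (1 + a) := by
  simpa using isUnit_one_sub_of_norm_lt_one (x := -a) (by simpa using ha)

theorem injective_natCast_sub (n : ℤ) : Function.Injective fun m : ℕ => (m : ℤ) - n :=
  fun a b h => by simpa using h

theorem summable_mul_of_norm_le [CompleteSpace A] {e : ℤ → A} (he : Summable fun n => ‖e n‖)
    {x : ℕ → A} {K : ℝ} (hx : ∀ n, ‖x n‖ ≤ K) (n : ℤ) :
    Summable fun m : ℕ => e (m - n) * x m :=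
  .of_norm_bounded ((he.comp_injective (injective_natCast_sub n)).mul_right K) fun m =>
    (norm_mul_le _ _).trans (mul_le_mul_of_nonneg_left (hx m) (norm_nonneg _))

theorem norm_tsum_mul_le {e : ℤ → A} (he : Summable fun n => ‖e n‖) {x : ℕ → A} {K : ℝ}
    (hx : ∀ n, ‖x n‖ ≤ K) (n : ℤ) : ‖∑' m : ℕ, e (m - n) * x m‖ ≤ (∑' n, ‖e n‖) * K := by
  have hinj := injective_natCast_sub n
  have hK : 0 ≤ K := (norm_nonneg _).trans (hx 0)
  calc ‖∑' m : ℕ, e (m - n) * x m‖ ≤ ∑' m : ℕ, ‖e (m - n)‖ * K :=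
        tsum_of_norm_bounded ((he.comp_injective hinj).mul_right K).hasSum fun m =>
          (norm_mul_le _ _).trans (mul_le_mul_of_nonneg_left (hx m) (norm_nonneg _))
    _ = (∑' m : ℕ, ‖e (m - n)‖) * K := tsum_mul_right
    _ ≤ (∑' n, ‖e n‖) * K := by
        gcongr
        exact tsum_comp_le_tsum_of_inj he (fun _ => norm_nonneg _) hinj

theorem exists_toeplitz_solution [CompleteSpace A] {e : ℤ → A} (he : Summable fun n => ‖e n‖)
    (hlt : ∑' n, ‖e n‖ < 1) (a : A) :
    ∃ x : ℕ → A, x 0 = a ∧ (∀ n, ‖x (n + 1)‖ ≤ (∑' n, ‖e n‖) * ‖a‖) ∧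
      ∀ n : ℕ, x (n + 1) + ∑' m : ℕ, e (m - (n + 1)) * x m = 0 := by
  set q := ∑' n, ‖e n‖
  have hq0 : 0 ≤ q := tsum_nonneg fun _ => norm_nonneg _
  let T : BoundedContinuousFunction ℕ A → ℕ → A := fun x n =>
    Nat.casesOn n a fun n => -∑' m : ℕ, e (m - (n + 1)) * x m
  have hT : ∀ x n, ‖T x n‖ ≤ max ‖a‖ (q * ‖x‖) := by
    rintro x (_ | n)
    · exact le_max_left _ _
    · exact (norm_neg _).trans_le <|
        (norm_tsum_mul_le he (fun m => x.norm_coe_le_norm m) _).trans (le_max_right _ _)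
  let Φ : BoundedContinuousFunction ℕ A → BoundedContinuousFunction ℕ A := fun x =>
    .ofNormedAddCommGroupDiscrete _ _ (hT x)
  have hΦ : ContractingWith ⟨q, hq0⟩ Φ := by
    refine ⟨hlt, LipschitzWith.of_dist_le_mul fun x y => ?_⟩
    refine (BoundedContinuousFunction.dist_le (by positivity)).2 ?_
    rintro (_ | n)
    · exact (dist_self a).trans_le (by positivity)
    · have hs := fun x : BoundedContinuousFunction ℕ A =>
        summable_mul_of_norm_le he (fun m => x.norm_coe_le_norm m) (n + 1)
      rw [dist_eq_norm x y]
      calc dist (-∑' m : ℕ, e (m - (n + 1)) * x m) (-∑' m : ℕ, e (m - (n + 1)) * y m)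
          = ‖∑' m : ℕ, e (m - (n + 1)) * (x - y) m‖ := by
            rw [dist_neg_neg, dist_eq_norm, ← (hs x).tsum_sub (hs y)]
            simp only [BoundedContinuousFunction.sub_apply, mul_sub]
        _ ≤ q * ‖x - y‖ := norm_tsum_mul_le he (fun m => (x - y).norm_coe_le_norm m) _
  set x := hΦ.fixedPoint Φ
  have hx : ∀ n, x n = T x n := fun n =>
    (DFunLike.congr_fun hΦ.fixedPoint_isFixedPt.eq n).symm
  have hxa : ‖x‖ ≤ ‖a‖ := by
    have h : ‖x‖ ≤ max ‖a‖ (q * ‖x‖) :=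
      (BoundedContinuousFunction.norm_le (by positivity)).2 fun n => hx n ▸ hT x n
    rcases le_max_iff.1 h with h | h
    · exact h
    · nlinarith [norm_nonneg x, norm_nonneg a]
  refine ⟨x, hx 0, fun n => ?_, fun n => ?_⟩
  · rw [hx, norm_neg]
    exact norm_tsum_mul_le he (fun m => (x.norm_coe_le_norm m).trans hxa) _
  · rw [hx, neg_add_cancel]

end Toeplitz

section NearIdentity

variable {A : Type*} [NormedRing A] [NormedAlgebra ℂ A] [CompleteSpace A]

theorem hasSum_laurent_mul_powerSeries {d : ℤ → A} {x : ℕ → A} {z : ℂ} (hz : z ≠ 0) {a b : A}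
    (hd : HasSum (fun n : ℤ => z ^ n • d n) a) (hd' : Summable fun n : ℤ => ‖z ^ n • d n‖)
    (hx : HasSum (fun m : ℕ => z⁻¹ ^ m • x m) b) (hx' : Summable fun m : ℕ => ‖z⁻¹ ^ m • x m‖) :
    HasSum (fun n : ℤ => z ^ n • ∑' m : ℕ, d (n + m) * x m) (a * b) := by
  have hsum := summable_mul_of_summable_norm hd' hx'
  have hprod := hd.mul hx hsum
  let σ : ℤ × ℕ ≃ ℤ × ℕ :=
    { toFun := fun p => (p.1 + p.2, p.2)
      invFun := fun p => (p.1 - p.2, p.2)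
      left_inv := fun p => by simp
      right_inv := fun p => by simp }
  have hshear : HasSum (fun p : ℤ × ℕ => z ^ p.1 • (d (p.1 + p.2) * x p.2)) (a * b) := by
    rw [← σ.hasSum_iff] at hprod
    refine hprod.congr_fun fun p => ?_
    simp only [Function.comp_apply, σ, Equiv.coe_fn_mk, smul_mul_smul_comm]
    rw [zpow_add₀ hz, mul_assoc, zpow_natCast, ← mul_pow, mul_inv_cancel₀ hz, one_pow, mul_one]
  refine hshear.prod_fiberwise fun n => ?_
  rw [← tsum_const_smul'']
  exact (hshear.summable.prod_factor n).hasSum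

theorem hasSum_toeplitz {ε : ℂ → A} (hε : DifferentiableOn ℂ ε {(0 : ℂ)}ᶜ) {x : ℕ → A} {K : ℝ}
    (hxK : ∀ n, ‖x n‖ ≤ K)
    (hx : ∀ n : ℕ, x (n + 1) + ∑' m : ℕ, laurentCoeff ε (m - (n + 1)) * x m = 0)
    {z : ℂ} (hz : 1 < ‖z‖) :
    HasSum (fun n : ℕ => z ^ n • ∑' m : ℕ, laurentCoeff ε (n + m) * x m)
      ((1 + ε z) * ∑' m : ℕ, z⁻¹ ^ m • x m - x 0) := by
  have hz0 : z ≠ 0 := norm_pos_iff.1 (zero_lt_one.trans hz)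
  have hY := summable_norm_inv_pow_smul hxK hz
  have hprod : HasSum (fun n : ℤ => z ^ n • ∑' m : ℕ, laurentCoeff ε (n + m) * x m)
      (ε z * ∑' m : ℕ, z⁻¹ ^ m • x m) := by
    refine hasSum_laurent_mul_powerSeries hz0 (hasSum_laurentCoeff hε hz0) ?_ hY.of_norm.hasSum hY
    simpa only [norm_smul, norm_zpow, mul_comm] using
      summable_norm_laurentCoeff hε (norm_pos_iff.2 hz0)
  have hneg : HasSum (fun n : ℕ => z ^ (-(n + 1) : ℤ) • ∑' m : ℕ,
      laurentCoeff ε (-(n + 1) + m) * x m) (-(∑' m : ℕ, z⁻¹ ^ m • x m - x 0)) := by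
    have htail := ((hasSum_nat_add_iff' 1).2 hY.of_norm.hasSum).neg
    simp only [Finset.sum_range_one, pow_zero, one_smul] at htail
    refine htail.congr_fun fun n => ?_
    have hcoeff : ∑' m : ℕ, laurentCoeff ε (-(n + 1) + m) * x m = -x (n + 1) := by
      simpa only [neg_add_eq_sub] using eq_neg_of_add_eq_zero_right (hx n)
    rw [hcoeff, smul_neg, zpow_neg, ← Nat.cast_succ, zpow_natCast, inv_pow]
  have hnonneg := (hprod.summable.comp_injective Nat.cast_injective).hasSum
  have hsplit := hprod.unique (hnonneg.of_nat_of_neg_add_one hneg)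
  suffices h : (1 + ε z) * ∑' m : ℕ, z⁻¹ ^ m • x m - x 0 = _ from h ▸ hnonneg
  rw [add_mul, one_mul, hsplit]
  abel

theorem exists_one_add_mul_eq_entire {ε : ℂ → A} (hε : DifferentiableOn ℂ ε {(0 : ℂ)}ᶜ) {δ : ℝ}
    (hδ : 3 * δ < 1) (hδ1 : 3 * δ * ‖(1 : A)‖ < 1)
    (hεδ : ∀ z, ‖z‖ = 2 ∨ ‖z‖ = 1 / 2 → ‖ε z‖ ≤ δ) :
    ∃ u Y : ℂ → A, Differentiable ℂ u ∧ DifferentiableOn ℂ Y (Metric.ball 0 1) ∧ IsUnit (u 2) ∧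
      ∀ z, 1 < ‖z‖ → (1 + ε z) * Y z⁻¹ = u z := by
  have hsum : Summable fun n => ‖laurentCoeff ε n‖ := by
    simpa using summable_norm_laurentCoeff hε one_pos
  have hq := tsum_norm_laurentCoeff_le hε hεδ
  obtain ⟨x, hx0, hxle, hx⟩ := exists_toeplitz_solution hsum (hq.trans_lt hδ) (1 : A)
  have hxB : ∀ m, ‖x m‖ ≤ ‖(1 : A)‖ := by
    rintro (_ | m)
    · rw [hx0]
    · exact (hxle m).trans (mul_le_of_le_one_left (norm_nonneg _) (hq.trans hδ.le))
  have hu := fun z (hz : 1 < ‖z‖) => hasSum_toeplitz hε hxB hx hz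
  have huY : ∀ z, 1 < ‖z‖ → (1 + ε z) * ∑' m : ℕ, z⁻¹ ^ m • x m =
      1 + ∑' n : ℕ, z ^ n • ∑' m : ℕ, laurentCoeff ε (n + m) * x m := fun z hz => by
    rw [(hu z hz).tsum_eq, hx0, add_sub_cancel]
  refine ⟨_, fun w => ∑' m : ℕ, w ^ m • x m, ?_, ?_, ?_, huY⟩
  · refine (differentiable_const 1).add fun z => ?_
    have hr : (1 : ℝ) < ‖((‖z‖ + 2 : ℝ) : ℂ)‖ := by
      rw [Complex.norm_of_nonneg (by positivity)]
      linarith [norm_nonneg z]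
    refine (differentiableOn_tsum_pow_smul
      (hu _ hr).summable.tendsto_atTop_zero.norm.bddAbove_range).differentiableAt
      (Metric.isOpen_ball.mem_nhds ?_)
    rw [mem_ball_zero_iff, Complex.norm_of_nonneg (by positivity)]
    linarith
  · have := differentiableOn_tsum_pow_smul (c := x) (z₀ := 1) ⟨‖(1 : A)‖, by
      rintro _ ⟨m, rfl⟩
      simpa using hxB m⟩
    simpa using this
  · have h2 : 1 < ‖(2 : ℂ)‖ := by simp
    rw [← huY 2 h2, (summable_norm_inv_pow_smul hxB h2).of_norm.tsum_eq_zero_add, pow_zero,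
      one_smul, hx0]
    refine (isUnit_one_add_of_norm_lt_one ?_).mul (isUnit_one_add_of_norm_lt_one ?_)
    · have := hεδ 2 (by simp)
      linarith [norm_nonneg (ε 2)]
    · refine (tsum_of_norm_bounded ((hasSum_geometric_two' 1).mul_right (3 * δ * ‖(1 : A)‖))
        fun m => ?_).trans_lt (by simpa using hδ1)
      calc ‖(2 : ℂ)⁻¹ ^ (m + 1) • x (m + 1)‖ = 1 / 2 / 2 ^ m * ‖x (m + 1)‖ := by
            rw [norm_smul, norm_pow, norm_inv, Complex.norm_ofNat, pow_succ, inv_pow]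
            ring
        _ ≤ 1 / 2 / 2 ^ m * (3 * δ * ‖(1 : A)‖) := by
            gcongr
            exact (hxle m).trans (by gcongr)

end NearIdentity

section Clutching

variable {A : Type*} [NormedRing A] [NormedAlgebra ℂ A]

/-- Clutching functions `ℂ* → Aˣ`, gluing the trivial bundles with fibre `A` over the charts
`ℂ` and `ℂP¹ \ {0}`. The value at `0` is irrelevant. -/
structure IsClutching (f : ℂ → A) : Prop where
  differentiableOn : DifferentiableOn ℂ f {(0 : ℂ)}ᶜ
  isUnit : ∀ z, z ≠ 0 → IsUnit (f z)

/-- Homomorphisms between the bundles with clutching functions `f` and `f'`, given by entire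
functions in the two charts: `U` in the coordinate `z` and `V` in the coordinate `z⁻¹`. -/
structure IsBundleHom (f f' U V : ℂ → A) : Prop where
  differentiable_left : Differentiable ℂ U
  differentiable_right : Differentiable ℂ V
  mul_eq_mul : ∀ z, z ≠ 0 → f' z * V z⁻¹ = U z * f z

/-- Homomorphisms between the bundles with clutching functions `f` and `f'` that are invertible
over some point of `ℂ*`, hence over a dense set. -/
structure IsGenericIso (f f' U V : ℂ → A) : Prop extends IsBundleHom f f' U V where
  exists_isUnit : ∃ z, z ≠ 0 ∧ IsUnit (U z)

/-- Isomorphisms between the bundles with clutching functions `f` and `f'`. -/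
structure IsBundleIso (f f' U V : ℂ → A) : Prop extends IsBundleHom f f' U V where
  isUnit_left : ∀ z, IsUnit (U z)
  isUnit_right : ∀ z, IsUnit (V z)

/-- The clutching function of the same bundle after exchanging the charts at `0` and `∞`. -/
noncomputable def flipChart (f : ℂ → A) (w : ℂ) : A :=
  Ring.inverse (f w⁻¹)

variable {f f' f'' U U' V V' : ℂ → A}

theorem IsClutching.ringInverse [CompleteSpace A] (hf : IsClutching f) :
    IsClutching fun z => Ring.inverse (f z) where
  differentiableOn := hf.differentiableOn.inverse hf.isUnit
  isUnit z hz := (hf.isUnit z hz).ringInverse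

theorem IsClutching.flip [CompleteSpace A] (hf : IsClutching f) :
    IsClutching (flipChart f) where
  differentiableOn := differentiableOn_comp_inv hf.ringInverse.differentiableOn
  isUnit w hw := hf.ringInverse.isUnit w⁻¹ (inv_ne_zero hw)

theorem IsClutching.flipChart_flipChart (hf : IsClutching f) {z : ℂ} (hz : z ≠ 0) :
    flipChart (flipChart f) z = f z := by
  simp only [flipChart, inv_inv, Ring.inverse_inverse (hf.isUnit z hz)]

namespace IsBundleHom

theorem comp (h' : IsBundleHom f' f'' U' V') (h : IsBundleHom f f' U V) :
    IsBundleHom f f'' (fun z => U' z * U z) (fun w => V' w * V w) where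
  differentiable_left := h'.differentiable_left.mul h.differentiable_left
  differentiable_right := h'.differentiable_right.mul h.differentiable_right
  mul_eq_mul z hz := by
    rw [← mul_assoc, h'.mul_eq_mul z hz, mul_assoc, h.mul_eq_mul z hz, mul_assoc]

theorem congr {e e' : ℂ → A} (h : IsBundleHom f f' U V) (he : ∀ z, z ≠ 0 → e z = f z)
    (he' : ∀ z, z ≠ 0 → e' z = f' z) : IsBundleHom e e' U V where
  differentiable_left := h.differentiable_left
  differentiable_right := h.differentiable_right
  mul_eq_mul z hz := by rw [he z hz, he' z hz, h.mul_eq_mul z hz]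

theorem flip (h : IsBundleHom f f' U V) (hf : IsClutching f) (hf' : IsClutching f') :
    IsBundleHom (flipChart f) (flipChart f') V U where
  differentiable_left := h.differentiable_right
  differentiable_right := h.differentiable_left
  mul_eq_mul w hw := by
    have hw' := inv_ne_zero hw
    have hVU := h.mul_eq_mul w⁻¹ hw'
    rw [inv_inv] at hVU
    calc Ring.inverse (f' w⁻¹) * U w⁻¹
        = Ring.inverse (f' w⁻¹) * (U w⁻¹ * f w⁻¹) * Ring.inverse (f w⁻¹) := by
          rw [mul_assoc, mul_assoc, Ring.mul_inverse_cancel _ (hf.isUnit _ hw'), mul_one]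
      _ = V w * Ring.inverse (f w⁻¹) := by
          rw [← hVU, ← mul_assoc, Ring.inverse_mul_cancel _ (hf'.isUnit _ hw'), one_mul]

theorem of_comp {z₀ : ℂ} (hcomp : IsBundleHom f f'' (fun z => U' z * U z) (fun w => V' w * V w))
    (h : IsBundleHom f f' U V) (hf' : ContinuousOn f' {(0 : ℂ)}ᶜ)
    (hf'' : ContinuousOn f'' {(0 : ℂ)}ᶜ) (hU' : Differentiable ℂ U') (hV' : Differentiable ℂ V')
    (hV : ∀ z, z ≠ 0 → z ≠ z₀ → IsUnit (V z⁻¹)) : IsBundleHom f' f'' U' V' where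
  differentiable_left := hU'
  differentiable_right := hV'
  mul_eq_mul := by
    have hgeneric : Set.EqOn (fun z => f'' z * V' z⁻¹) (fun z => U' z * f' z) {0, z₀}ᶜ := by
      intro z hz
      obtain ⟨hz0, hz₀⟩ : z ≠ 0 ∧ z ≠ z₀ := by simpa using hz
      refine (hV z hz0 hz₀).mul_left_injective ?_
      simp only [mul_assoc, hcomp.mul_eq_mul z hz0, h.mul_eq_mul z hz0]
    have hcont : ContinuousOn (fun z => V' z⁻¹) {(0 : ℂ)}ᶜ :=
      (differentiableOn_comp_inv hV'.differentiableOn).continuousOn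
    have hdense : Dense ({0, z₀}ᶜ : Set ℂ) := (Set.toFinite {0, z₀}).countable.dense_compl ℂ
    exact hgeneric.of_subset_closure (hf''.mul hcont) (hU'.continuous.continuousOn.mul hf')
      (Set.compl_subset_compl.2 (Set.singleton_subset_iff.2 (Set.mem_insert _ _)))
      fun z _ => hdense z

end IsBundleHom

theorem IsGenericIso.congr {e e' : ℂ → A} (h : IsGenericIso f f' U V)
    (he : ∀ z, z ≠ 0 → e z = f z) (he' : ∀ z, z ≠ 0 → e' z = f' z) : IsGenericIso e e' U V where
  toIsBundleHom := h.toIsBundleHom.congr he he'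
  exists_isUnit := h.exists_isUnit

theorem IsGenericIso.flip (h : IsGenericIso f f' U V) (hf : IsClutching f)
    (hf' : IsClutching f') : IsGenericIso (flipChart f) (flipChart f') V U where
  toIsBundleHom := h.toIsBundleHom.flip hf hf'
  exists_isUnit := by
    obtain ⟨z, hz, hUz⟩ := h.exists_isUnit
    refine ⟨z⁻¹, inv_ne_zero hz, ((hf'.isUnit z hz).mul_left_iff).1 ?_⟩
    rw [h.mul_eq_mul z hz]
    exact hUz.mul (hf.isUnit z hz)

namespace IsBundleIso

theorem trans (h : IsBundleIso f f' U V) (h' : IsBundleIso f' f'' U' V') :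
    IsBundleIso f f'' (fun z => U' z * U z) (fun w => V' w * V w) where
  toIsBundleHom := h'.toIsBundleHom.comp h.toIsBundleHom
  isUnit_left z := (h'.isUnit_left z).mul (h.isUnit_left z)
  isUnit_right w := (h'.isUnit_right w).mul (h.isUnit_right w)

theorem symm [CompleteSpace A] (h : IsBundleIso f f' U V) :
    IsBundleIso f' f (fun z => Ring.inverse (U z)) (fun w => Ring.inverse (V w)) where
  differentiable_left := h.differentiable_left.inverse h.isUnit_left
  differentiable_right := h.differentiable_right.inverse h.isUnit_right
  mul_eq_mul z hz := by
    calc f z * Ring.inverse (V z⁻¹)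
        = Ring.inverse (U z) * (U z * f z) * Ring.inverse (V z⁻¹) := by
          rw [← mul_assoc, Ring.inverse_mul_cancel _ (h.isUnit_left z), one_mul]
      _ = Ring.inverse (U z) * f' z := by
          rw [← h.mul_eq_mul z hz, mul_assoc, mul_assoc,
            Ring.mul_inverse_cancel _ (h.isUnit_right z⁻¹), mul_one]
  isUnit_left z := (h.isUnit_left z).ringInverse
  isUnit_right w := (h.isUnit_right w).ringInverse

end IsBundleIso

theorem IsClutching.exists_isGenericIso_zpow_smul_one [CompleteSpace A] (hf : IsClutching f) :
    ∃ (M : ℕ) (U V : ℂ → A), IsGenericIso (fun z => z ^ (-M : ℤ) • (1 : A)) f U V := by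
  set g : ℂ → A := fun z => Ring.inverse (f z)
  obtain ⟨δ, hδ, hδ1⟩ := exists_pos_mul_lt one_pos (3 * (1 + ‖(1 : A)‖))
  obtain ⟨K, hK⟩ := exists_norm_le_of_norm_eq hf.differentiableOn two_pos one_half_pos
  obtain ⟨η, hη, hKη⟩ := exists_pos_mul_lt hδ K
  obtain ⟨M, q, hq, hgq⟩ := exists_laurentPolynomial_approx hf.ringInverse.differentiableOn
    two_pos one_half_pos hη
  have hp : DifferentiableOn ℂ (fun z => z ^ M • q z⁻¹) {(0 : ℂ)}ᶜ :=
    (differentiableOn_pow M).smul (differentiableOn_comp_inv hq.differentiableOn)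
  obtain ⟨u, Y, hu, hY, hu2, huY⟩ := exists_one_add_mul_eq_entire
    (ε := fun z => f z * (z ^ M • q z⁻¹) - 1) (δ := δ) ((hf.differentiableOn.mul hp).sub_const 1)
    (by nlinarith [norm_nonneg (1 : A)]) (by nlinarith [norm_nonneg (1 : A)]) fun z hz => by
      have hz0 : z ≠ 0 := by
        rintro rfl
        norm_num at hz
      have hε : f z * (z ^ M • q z⁻¹) - 1 = -(f z * (g z - z ^ M • q z⁻¹)) := by
        rw [mul_sub, Ring.mul_inverse_cancel _ (hf.isUnit z hz0), neg_sub]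
      rw [hε, norm_neg]
      exact (norm_mul_le _ _).trans <| (mul_le_mul (hK z hz) (hgq z hz).le (norm_nonneg _)
        ((norm_nonneg _).trans (hK z hz))).trans hKη.le
  obtain ⟨V, hV, hVeq⟩ := exists_entire_of_eq_on_ball one_pos (hq.differentiableOn.mul hY)
    (ψ := fun w => w ^ M • (g w⁻¹ * u w⁻¹)) ((differentiableOn_pow M).smul
      (differentiableOn_comp_inv (hf.ringInverse.differentiableOn.mul hu.differentiableOn)))
    fun w hw0 hw => by
      have hinv := inv_ne_zero hw0
      rw [Pi.mul_apply]
      rw [← huY w⁻¹ (by rw [norm_inv]; exact (one_lt_inv₀ (norm_pos_iff.2 hw0)).2 hw)]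
      simp only [add_sub_cancel, inv_inv]
      rw [← mul_assoc, ← mul_assoc, Ring.inverse_mul_cancel _ (hf.isUnit _ hinv), one_mul,
        smul_mul_assoc, smul_smul, ← mul_pow, mul_inv_cancel₀ hw0, one_pow, one_smul]
  refine ⟨M, u, V, ⟨hu, hV, fun z hz => ?_⟩, 2, two_ne_zero, hu2⟩
  rw [hVeq _ (inv_ne_zero hz), inv_inv, mul_smul_comm, ← mul_assoc,
    Ring.mul_inverse_cancel _ (hf.isUnit z hz), one_mul, mul_smul_comm, mul_one, zpow_neg,
    zpow_natCast, inv_pow]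

end Clutching

section LineBundle

theorem eq_zero_of_isBundleHom_zpow {s t : ℤ} (hst : t < s) {u v : ℂ → ℂ}
    (h : IsBundleHom (fun z => z ^ s) (fun z => z ^ t) u v) (z : ℂ) : u z = 0 := by
  have hinv := Filter.tendsto_inv₀_cobounded (α := ℂ)
  obtain ⟨k, hk, hkst⟩ : ∃ k : ℕ, k ≠ 0 ∧ s = t + k := ⟨(s - t).toNat, by omega, by omega⟩
  have hu : ∀ z, z ≠ 0 → z⁻¹ ^ k * v z⁻¹ = u z := fun z hz => by
    have := h.mul_eq_mul z hz
    simp only [hkst, zpow_add₀ hz, zpow_natCast] at this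
    have hzt := zpow_ne_zero t hz
    rw [inv_pow, inv_mul_eq_iff_eq_mul₀ (pow_ne_zero k hz)]
    apply mul_left_cancel₀ hzt
    rw [this]
    ring
  have hzero : Tendsto (fun z => z⁻¹ ^ k * v z⁻¹) (Bornology.cobounded ℂ) (𝓝 0) := by
    have : ContinuousAt (fun w => w ^ k * v w) 0 :=
      ((continuous_pow k).mul h.differentiable_right.continuous).continuousAt
    simpa [ContinuousAt, hk, Function.comp_def] using this.tendsto.comp hinv
  refine h.differentiable_left.apply_eq_of_tendsto_cocompact z ?_
  rw [← Metric.cobounded_eq_cocompact]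
  exact hzero.congr' ((Bornology.eventually_ne_cobounded 0).mono hu)

theorem IsClutching.exists_degree_bound {φ : ℂ → ℂ} (hφ : IsClutching φ) :
    ∃ d : ℤ, ∀ (s : ℤ) (u v : ℂ → ℂ), IsGenericIso (fun z => z ^ s) φ u v → s ≤ d := by
  obtain ⟨M, u', v', h'⟩ := hφ.ringInverse.exists_isGenericIso_zpow_smul_one
  refine ⟨M, fun s u v h => ?_⟩
  by_contra! hs
  have hprod : IsBundleHom (fun z => z ^ (s - M)) (fun z => z ^ (0 : ℤ))
      (fun z => u z * u' z) (fun w => v w * v' w) := by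
    refine ⟨h.differentiable_left.mul h'.differentiable_left,
      h.differentiable_right.mul h'.differentiable_right, fun z hz => ?_⟩
    calc z ^ (0 : ℤ) * (v z⁻¹ * v' z⁻¹)
        = φ z * v z⁻¹ * (Ring.inverse (φ z) * v' z⁻¹) := by
          rw [mul_mul_mul_comm, Ring.mul_inverse_cancel _ (hφ.isUnit z hz), zpow_zero]
      _ = u z * u' z * z ^ (s - M) := by
          rw [h.mul_eq_mul z hz, h'.mul_eq_mul z hz, sub_eq_add_neg, zpow_add₀ hz, smul_eq_mul]
          ring
  have hzero := eq_zero_of_isBundleHom_zpow (by omega) hprod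
  have analytic {χ : ℂ → ℂ} (hχ : Differentiable ℂ χ) : AnalyticOnNhd ℂ χ Set.univ :=
    hχ.differentiableOn.analyticOnNhd isOpen_univ
  rcases (analytic h.differentiable_left).eq_zero_or_eq_zero_of_mul_eq_zero
    (analytic h'.differentiable_left) (fun z _ => hzero z) isPreconnected_univ with hu | hu
  · obtain ⟨z, -, hz⟩ := h.exists_isUnit
    exact hz.ne_zero (hu z trivial)
  · obtain ⟨z, -, hz⟩ := h'.exists_isUnit
    exact hz.ne_zero (hu z trivial)

end LineBundle

section VectorBundle

open scoped Matrix Matrix.Norms.Operator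

theorem differentiableOn_matrix_iff {m n : Type*} [Finite m] [Finite n] {W : ℂ → Matrix m n ℂ}
    {s : Set ℂ} :
    DifferentiableOn ℂ W s ↔ ∀ i j, DifferentiableOn ℂ (fun z => W z i j) s := by
  cases nonempty_fintype m
  cases nonempty_fintype n
  exact differentiableOn_pi.trans <| forall_congr' fun _ => differentiableOn_pi

theorem differentiable_matrix_iff {m n : Type*} [Finite m] [Finite n] {W : ℂ → Matrix m n ℂ} :
    Differentiable ℂ W ↔ ∀ i j, Differentiable ℂ fun z => W z i j := by
  simp only [← differentiableOn_univ, differentiableOn_matrix_iff]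

theorem differentiableOn_det {n : Type*} [Fintype n] [DecidableEq n] {W : ℂ → Matrix n n ℂ}
    {s : Set ℂ} (hW : DifferentiableOn ℂ W s) : DifferentiableOn ℂ (fun z => (W z).det) s := by
  rw [differentiableOn_matrix_iff] at hW
  simp only [Matrix.det_apply]
  fun_prop

theorem differentiable_det {n : Type*} [Fintype n] [DecidableEq n] {W : ℂ → Matrix n n ℂ}
    (hW : Differentiable ℂ W) : Differentiable ℂ fun z => (W z).det :=
  differentiableOn_univ.1 <| differentiableOn_det hW.differentiableOn

variable {n : Type*} [DecidableEq n]

theorem prod_zpow_eq_zpow_sum {ι G₀ : Type*} [CommGroupWithZero G₀] {z : G₀} (hz : z ≠ 0)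
    (s : Finset ι) (a : ι → ℤ) : ∏ i ∈ s, z ^ a i = z ^ ∑ i ∈ s, a i := by
  induction s using Finset.cons_induction with
  | empty => simp
  | cons i s hi ih => rw [Finset.prod_cons, Finset.sum_cons, zpow_add₀ hz, ih]

/-- The clutching function `diag (z ^ a i)` of the bundle `⨁ O(a i)`. -/
noncomputable def diagZPow (a : n → ℤ) (z : ℂ) : Matrix n n ℂ :=
  Matrix.diagonal fun i => z ^ a i

theorem diagZPow_const (s : ℤ) : diagZPow (fun _ : n => s) = fun z => z ^ s • 1 :=
  funext fun _ => (Matrix.smul_one_eq_diagonal _).symm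

/-- The matrix `diag (1, …, 1, t, 1, …, 1)` with `t` in position `j`. -/
def diagUpdate (j : n) (t : ℂ) : Matrix n n ℂ :=
  Matrix.diagonal (Function.update 1 j t)

theorem differentiable_diagUpdate [Finite n] (j : n) {t : ℂ → ℂ} (ht : Differentiable ℂ t) :
    Differentiable ℂ fun z => diagUpdate j (t z) := by
  refine differentiable_matrix_iff.2 fun i k => ?_
  simp only [diagUpdate, Matrix.diagonal_apply, Function.update_apply]
  split_ifs
  exacts [ht, differentiable_const _, differentiable_const _]

variable [Fintype n]

theorem det_diagZPow (a : n → ℤ) {z : ℂ} (hz : z ≠ 0) : (diagZPow a z).det = z ^ ∑ i, a i := by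
  rw [diagZPow, Matrix.det_diagonal, prod_zpow_eq_zpow_sum hz]

theorem isClutching_diagZPow (a : n → ℤ) : IsClutching (diagZPow a) where
  differentiableOn := differentiableOn_matrix_iff.2 fun i j => by
    rcases eq_or_ne i j with rfl | hij
    · simpa only [diagZPow, Matrix.diagonal_apply_eq] using differentiableOn_zpow (a i) _ (by simp)
    · simp [diagZPow, hij]
  isUnit z hz := (Matrix.isUnit_iff_isUnit_det _).2 <| by
    rw [det_diagZPow a hz]
    exact (zpow_ne_zero _ hz).isUnit

theorem flipChart_diagZPow (a : n → ℤ) {w : ℂ} (hw : w ≠ 0) :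
    flipChart (diagZPow a) w = diagZPow a w := by
  rw [flipChart, ← Matrix.nonsing_inv_eq_ringInverse]
  refine Matrix.inv_eq_left_inv ?_
  rw [diagZPow, diagZPow, Matrix.diagonal_mul_diagonal, ← Matrix.diagonal_one]
  congr 1
  ext i
  rw [← mul_zpow, mul_inv_cancel₀ hw, one_zpow]

variable {f f' U V : ℂ → Matrix n n ℂ} {a b : n → ℤ}

theorem IsClutching.det (hf : IsClutching f) : IsClutching fun z => (f z).det where
  differentiableOn := differentiableOn_det hf.differentiableOn
  isUnit z hz := (Matrix.isUnit_iff_isUnit_det _).1 (hf.isUnit z hz)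

theorem IsGenericIso.det (h : IsGenericIso (diagZPow a) f U V) :
    IsGenericIso (fun z => z ^ ∑ i, a i) (fun z => (f z).det)
      (fun z => (U z).det) (fun w => (V w).det) where
  differentiable_left := differentiable_det h.differentiable_left
  differentiable_right := differentiable_det h.differentiable_right
  mul_eq_mul z hz := by
    rw [← Matrix.det_mul, h.mul_eq_mul z hz, Matrix.det_mul, det_diagZPow a hz]
  exists_isUnit := h.exists_isUnit.imp fun z hz => ⟨hz.1, (Matrix.isUnit_iff_isUnit_det _).1 hz.2⟩

theorem IsGenericIso.flip_diagZPow (h : IsGenericIso (diagZPow a) f U V) (hf : IsClutching f) :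
    IsGenericIso (diagZPow a) (flipChart f) V U :=
  (h.flip (isClutching_diagZPow a) hf).congr (fun _ hw => (flipChart_diagZPow a hw).symm)
    fun _ _ => rfl

theorem IsBundleHom.apply (h : IsBundleHom (diagZPow a) (diagZPow b) U V) (i j : n) :
    IsBundleHom (fun z => z ^ a j) (fun z => z ^ b i) (fun z => U z i j) (fun w => V w i j) where
  differentiable_left := differentiable_matrix_iff.1 h.differentiable_left i j
  differentiable_right := differentiable_matrix_iff.1 h.differentiable_right i j
  mul_eq_mul z hz := by
    simpa only [diagZPow, Matrix.diagonal_mul, Matrix.mul_diagonal] using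
      congrFun₂ (h.mul_eq_mul z hz) i j

theorem exists_sum_le_of_isGenericIso_diagZPow (hf : IsClutching f) :
    ∃ d : ℤ, ∀ (a : n → ℤ) (U V : ℂ → Matrix n n ℂ), IsGenericIso (diagZPow a) f U V →
      ∑ i, a i ≤ d := by
  obtain ⟨d, hd⟩ := hf.det.exists_degree_bound
  exact ⟨d, fun a U V h => hd _ _ _ h.det⟩

theorem det_one_updateCol {R : Type*} [CommRing R] (j : n) (c : n → R) :
    ((1 : Matrix n n R).updateCol j c).det = c j := by
  rw [← Matrix.cramer_apply, Matrix.cramer_one, Module.End.one_apply]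

theorem exists_isBundleIso_mulVec_single (a : n → ℤ) {c : n → ℂ} {j : n} (hj : c j ≠ 0)
    (hmin : ∀ k, c k ≠ 0 → a j ≤ a k) :
    ∃ E F : ℂ → Matrix n n ℂ, IsBundleIso (diagZPow a) (diagZPow a) E F ∧
      ∀ z, E z *ᵥ Pi.single j 1 = c := by
  let v : ℂ → n → ℂ := fun w k => c k * w ^ (a k - a j).toNat
  have isUnit_updateCol {d : n → ℂ} (hd : d j = c j) :
      IsUnit ((1 : Matrix n n ℂ).updateCol j d) := by
    rw [Matrix.isUnit_iff_isUnit_det, det_one_updateCol, hd]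
    exact hj.isUnit
  refine ⟨fun _ => (1 : Matrix n n ℂ).updateCol j c, fun w => (1 : Matrix n n ℂ).updateCol j (v w),
    { differentiable_left := differentiable_const _
      differentiable_right := differentiable_matrix_iff.2 fun i k => ?_
      mul_eq_mul := fun z hz => ?_
      isUnit_left := fun _ => isUnit_updateCol rfl
      isUnit_right := fun w => isUnit_updateCol (by simp [v]) }, fun z => ?_⟩
  · simp only [Matrix.updateCol_apply]
    split_ifs
    exacts [(differentiable_pow _).const_mul _, differentiable_const _]
  · ext i k
    simp only [diagZPow, Matrix.diagonal_mul, Matrix.mul_diagonal, Matrix.updateCol_apply, v]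
    split_ifs with hk
    · subst hk
      by_cases hi : c i = 0
      · simp [hi]
      · obtain ⟨e, he⟩ := Int.le.dest (hmin i hi)
        rw [← he, add_sub_cancel_left, Int.toNat_natCast, zpow_add₀ hz, zpow_natCast, inv_pow]
        field_simp
    · rcases eq_or_ne i k with rfl | hik
      · rw [mul_comm]
      · simp [hik]
  · rw [Matrix.mulVec_single_one]
    ext k
    simp

theorem exists_differentiable_smul_eq {E : Type*} [NormedAddCommGroup E] [NormedSpace ℂ E]
    [CompleteSpace E] {φ : ℂ → E} (hφ : Differentiable ℂ φ) {α β : ℂ} (hαβ : α ≠ 0 ∨ β ≠ 0)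
    (hzero : ∀ z, α * z + β = 0 → φ z = 0) :
    ∃ ψ : ℂ → E, Differentiable ℂ ψ ∧ ∀ z, φ z = (α * z + β) • ψ z := by
  rcases eq_or_ne α 0 with rfl | hα
  · have hβ := hαβ.resolve_left (not_not.2 rfl)
    exact ⟨fun z => β⁻¹ • φ z, hφ.const_smul _, fun z => by
      rw [zero_mul, zero_add, smul_inv_smul₀ hβ]⟩
  · refine ⟨fun z => α⁻¹ • dslope φ (-β / α) z, ?_, fun z => ?_⟩
    · rw [← differentiableOn_univ] at hφ ⊢
      exact ((Complex.differentiableOn_dslope univ_mem).2 hφ).const_smul _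
    · have hroot : φ (-β / α) = 0 := hzero _ (by field_simp; ring)
      have hfactor : α * z + β = α * (z - -β / α) := by field_simp; ring
      rw [hfactor, mul_comm, mul_smul, smul_inv_smul₀ hα, sub_smul_dslope, hroot, sub_zero]

theorem det_diagUpdate (j : n) (t : ℂ) : (diagUpdate j t).det = t := by
  simp [diagUpdate, Matrix.det_diagonal, Finset.prod_update_of_mem]

theorem exists_differentiable_mul_diagUpdate {W : ℂ → Matrix n n ℂ} (hW : Differentiable ℂ W)
    {α β : ℂ} (hαβ : α ≠ 0 ∨ β ≠ 0) {j : n}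
    (hzero : ∀ z, α * z + β = 0 → W z *ᵥ Pi.single j 1 = 0) :
    ∃ W' : ℂ → Matrix n n ℂ, Differentiable ℂ W' ∧ ∀ z, W z = W' z * diagUpdate j (α * z + β) := by
  have hcol : Differentiable ℂ fun z => (W z).col j :=
    differentiable_pi.2 fun i => differentiable_matrix_iff.1 hW i j
  obtain ⟨ψ, hψ, hWψ⟩ := exists_differentiable_smul_eq hcol hαβ fun z hz => by
    rw [← Matrix.mulVec_single_one, hzero z hz]
  refine ⟨fun z => (W z).updateCol j (ψ z), differentiable_matrix_iff.2 fun i k => ?_, fun z => ?_⟩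
  · simp only [Matrix.updateCol_apply]
    split_ifs
    exacts [differentiable_pi.1 hψ i, differentiable_matrix_iff.1 hW i k]
  · ext i k
    simp only [diagUpdate, Matrix.mul_diagonal, Matrix.updateCol_apply]
    split_ifs with hk
    · subst hk
      simpa [mul_comm] using congrFun (hWψ z) i
    · simp [hk]

theorem isBundleHom_diagUpdate (a : n → ℤ) (j : n) (z₀ : ℂ) :
    IsBundleHom (diagZPow a) (diagZPow (Function.update a j (a j + 1)))
      (fun z => diagUpdate j (1 * z + -z₀)) (fun w => diagUpdate j (-z₀ * w + 1)) where
  differentiable_left := differentiable_diagUpdate j (by fun_prop)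
  differentiable_right := differentiable_diagUpdate j (by fun_prop)
  mul_eq_mul z hz := by
    simp only [diagZPow, diagUpdate, Matrix.diagonal_mul_diagonal]
    congr 1
    ext i
    rcases eq_or_ne i j with rfl | hi
    · simp only [Function.update_self, zpow_add_one₀ hz]
      field_simp
      ring
    · simp [hi]

theorem IsBundleHom.mulVec_single_eq_zero (h : IsBundleHom (diagZPow a) f U V) {z : ℂ} (hz : z ≠ 0)
    (hf : IsUnit (f z)) {j : n} (hU : U z *ᵥ Pi.single j 1 = 0) :
    V z⁻¹ *ᵥ Pi.single j 1 = 0 := by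
  have hdiag : diagZPow a z *ᵥ Pi.single j 1 = z ^ a j • Pi.single j 1 := by
    rw [diagZPow, Matrix.diagonal_mulVec_single, ← smul_eq_mul, Pi.single_smul']
  refine Matrix.mulVec_injective_of_isUnit hf ?_
  rw [Matrix.mulVec_mulVec, h.mul_eq_mul z hz, ← Matrix.mulVec_mulVec, hdiag, Matrix.mulVec_smul,
    hU, smul_zero, Matrix.mulVec_zero]

-- Since `U` kills the `j`-th summand at `z₀`, it extends to the twist of that summand by `z₀`.
theorem IsGenericIso.exists_update (h : IsGenericIso (diagZPow a) f U V) (hf : IsClutching f)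
    {z₀ : ℂ} {j : n} (hU : U z₀ *ᵥ Pi.single j 1 = 0) :
    ∃ U' V', IsGenericIso (diagZPow (Function.update a j (a j + 1))) f U' V' := by
  obtain ⟨U', hU', hUU'⟩ := exists_differentiable_mul_diagUpdate (j := j) h.differentiable_left
    (α := 1) (β := -z₀) (Or.inl one_ne_zero) fun z hz => by
      obtain rfl : z = z₀ := by linear_combination hz
      exact hU
  obtain ⟨V', hV', hVV'⟩ := exists_differentiable_mul_diagUpdate (j := j) h.differentiable_right
    (α := -z₀) (β := 1) (Or.inr one_ne_zero) fun w hw => by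
      have hw₀ : z₀ * w = 1 := by linear_combination -hw
      have hz₀ : z₀ ≠ 0 := left_ne_zero_of_mul_eq_one hw₀
      rw [← inv_eq_of_mul_eq_one_right hw₀]
      exact h.mulVec_single_eq_zero hz₀ (hf.isUnit z₀ hz₀) hU
  have hcomp := h.toIsBundleHom
  rw [funext hUU', funext hVV'] at hcomp
  refine ⟨U', V', hcomp.of_comp (z₀ := z₀) (isBundleHom_diagUpdate a j z₀)
    (isClutching_diagZPow _).differentiableOn.continuousOn hf.differentiableOn.continuousOn
    hU' hV' fun z hz hz₀ => ?_, h.exists_isUnit.imp fun z hz => ⟨hz.1, ?_⟩⟩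
  · rw [Matrix.isUnit_iff_isUnit_det, det_diagUpdate, isUnit_iff_ne_zero]
    intro h0
    field_simp at h0
    exact hz₀ (by linear_combination h0)
  · exact isUnit_of_mul_isUnit_left (hUU' z ▸ hz.2)

theorem IsGenericIso.exists_raise (h : IsGenericIso (diagZPow a) f U V) (hf : IsClutching f)
    {z₀ : ℂ} (hz₀ : ¬IsUnit (U z₀)) :
    ∃ j U' V', IsGenericIso (diagZPow (Function.update a j (a j + 1))) f U' V' := by
  obtain ⟨c, hc, hUc⟩ : ∃ c ≠ 0, U z₀ *ᵥ c = 0 := Matrix.exists_mulVec_eq_zero_iff.2 <| by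
    rwa [Matrix.isUnit_iff_isUnit_det, isUnit_iff_ne_zero, not_not] at hz₀
  obtain ⟨j, hj, hmin⟩ : ∃ j, c j ≠ 0 ∧ ∀ k, c k ≠ 0 → a j ≤ a k := by
    obtain ⟨k, hk⟩ := Function.ne_iff.1 hc
    simpa using Finset.exists_min_image {k | c k ≠ 0} a ⟨k, by simpa using hk⟩
  obtain ⟨E, F, hEF, hE⟩ := exists_isBundleIso_mulVec_single a hj hmin
  have hUE : (U z₀ * E z₀) *ᵥ Pi.single j 1 = 0 := by rw [← Matrix.mulVec_mulVec, hE, hUc]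
  exact ⟨j, IsGenericIso.exists_update ⟨h.toIsBundleHom.comp hEF.toIsBundleHom,
    h.exists_isUnit.imp fun z hz => ⟨hz.1, hz.2.mul (hEF.isUnit_left z)⟩⟩ hf hUE⟩

theorem IsClutching.exists_isBundleIso_diagZPow (hf : IsClutching f) :
    ∃ a U V, IsBundleIso (diagZPow a) f U V := by
  obtain ⟨d, hd⟩ := exists_sum_le_of_isGenericIso_diagZPow hf
  obtain ⟨M, U₀, V₀, h₀⟩ := hf.exists_isGenericIso_zpow_smul_one
  rw [← diagZPow_const] at h₀
  obtain ⟨_, ⟨a, U, V, h, rfl⟩, hmax⟩ := Int.exists_greatest_of_bdd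
    (P := fun s => ∃ a U V, IsGenericIso (diagZPow a) f U V ∧ ∑ i, a i = s)
    ⟨d, fun _ ⟨a, U, V, h, ha⟩ => ha ▸ hd a U V h⟩ ⟨_, _, _, _, h₀, rfl⟩
  have not_isGenericIso_update (j : n) (U' V' : ℂ → Matrix n n ℂ) :
      ¬IsGenericIso (diagZPow (Function.update a j (a j + 1))) f U' V' := fun h' => by
    have hle := hmax _ ⟨_, U', V', h', rfl⟩
    rw [Finset.sum_update_of_mem (Finset.mem_univ j),
      ← Finset.add_sum_erase _ a (Finset.mem_univ j), Finset.sdiff_singleton_eq_erase] at hle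
    omega
  refine ⟨a, U, V, h.toIsBundleHom, fun z => ?_, fun w => ?_⟩
  · by_contra hz
    obtain ⟨j, U', V', h'⟩ := h.exists_raise hf hz
    exact not_isGenericIso_update j U' V' h'
  · by_contra hw
    obtain ⟨j, V', U', h'⟩ := (h.flip_diagZPow hf).exists_raise hf.flip hw
    exact not_isGenericIso_update j U' V' <| (h'.flip_diagZPow hf.flip).congr (fun _ _ => rfl)
      fun z hz => (hf.flipChart_flipChart hz).symm

theorem isBundleIso_submatrix_one (a : n → ℤ) (σ : Equiv.Perm n) :
    IsBundleIso (diagZPow (a ∘ σ)) (diagZPow a) (fun _ => (1 : Matrix n n ℂ).submatrix id σ)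
      (fun _ => (1 : Matrix n n ℂ).submatrix id σ) where
  differentiable_left := differentiable_const _
  differentiable_right := differentiable_const _
  mul_eq_mul z _ := by
    ext i j
    simp only [diagZPow, Matrix.diagonal_mul, Matrix.mul_diagonal, Matrix.submatrix_apply,
      Function.comp_apply]
    rcases eq_or_ne i (σ j) with rfl | hij
    · rw [mul_comm]
    · simp [hij]
  isUnit_left _ := (Matrix.isUnit_submatrix_equiv (e₁ := Equiv.refl n) (e₂ := σ)).2 isUnit_one
  isUnit_right _ := (Matrix.isUnit_submatrix_equiv (e₁ := Equiv.refl n) (e₂ := σ)).2 isUnit_one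

theorem IsClutching.exists_antitone_isBundleIso {r : ℕ} {f : ℂ → Matrix (Fin r) (Fin r) ℂ}
    (hf : IsClutching f) : ∃ a, Antitone a ∧ ∃ U V, IsBundleIso (diagZPow a) f U V := by
  obtain ⟨a, U, V, h⟩ := hf.exists_isBundleIso_diagZPow
  exact ⟨a ∘ Tuple.sort (-a), fun _ _ hij => neg_le_neg_iff.1 (Tuple.monotone_sort (-a) hij), _, _,
    (isBundleIso_submatrix_one a _).trans h⟩

theorem det_eq_zero_of_card_lt {R : Type*} [CommRing R] {A : Matrix n n R} {s t : Finset n}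
    (hst : Fintype.card n < s.card + t.card) (hA : ∀ i ∈ s, ∀ j ∈ t, A i j = 0) : A.det = 0 := by
  rw [Matrix.det_apply]
  refine Finset.sum_eq_zero fun σ _ => ?_
  obtain ⟨j, hj, hσj⟩ : ∃ j ∈ t, σ j ∈ s := by
    by_contra! hdisj
    have hle := Finset.card_le_card_of_injOn (s := t) (t := sᶜ) σ
      (fun j hj => by simpa using hdisj j hj) σ.injective.injOn
    rw [Finset.card_compl] at hle
    have := s.card_le_univ
    omega
  rw [Finset.prod_eq_zero (f := fun i => A (σ i) i) (Finset.mem_univ j) (hA _ hσj j hj), smul_zero]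

theorem IsBundleIso.le_of_antitone {r : ℕ} {a b : Fin r → ℤ} {U V : ℂ → Matrix (Fin r) (Fin r) ℂ}
    (h : IsBundleIso (diagZPow a) (diagZPow b) U V) (ha : Antitone a) (hb : Antitone b) :
    a ≤ b := by
  intro k
  by_contra! hk
  refine ((Matrix.isUnit_iff_isUnit_det _).1 (h.isUnit_left 0)).ne_zero <|
    det_eq_zero_of_card_lt (s := Finset.Ici k) (t := Finset.Iic k) ?_ fun i hi j hj => ?_
  · simp
    omega
  · have hij : b i < a j :=
      (hb (Finset.mem_Ici.1 hi)).trans_lt (hk.trans_le (ha (Finset.mem_Iic.1 hj)))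
    exact eq_zero_of_isBundleHom_zpow hij (h.toIsBundleHom.apply i j) 0

theorem IsBundleIso.eq_of_antitone {r : ℕ} {a b : Fin r → ℤ}
    {f U V U' V' : ℂ → Matrix (Fin r) (Fin r) ℂ} (h : IsBundleIso (diagZPow a) f U V)
    (h' : IsBundleIso (diagZPow b) f U' V') (ha : Antitone a) (hb : Antitone b) : a = b :=
  le_antisymm ((h.trans h'.symm).le_of_antitone ha hb) ((h'.trans h.symm).le_of_antitone hb ha)

theorem isClutching_matrix_iff : IsClutching f ↔
    (∀ i j, DifferentiableOn ℂ (fun z => f z i j) {(0 : ℂ)}ᶜ) ∧ ∀ z, z ≠ 0 → IsUnit (f z) :=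
  ⟨fun h => ⟨differentiableOn_matrix_iff.1 h.differentiableOn, h.isUnit⟩,
    fun h => ⟨differentiableOn_matrix_iff.2 h.1, h.2⟩⟩

theorem exists_isBundleIso_diagZPow_iff : (∃ U V, IsBundleIso (diagZPow a) f U V) ↔
    ∃ g h : ℂ → Matrix n n ℂ, (∀ i j, Differentiable ℂ fun z => g z i j) ∧
      (∀ i j, Differentiable ℂ fun z => h z i j) ∧ (∀ z, IsUnit (g z)) ∧ (∀ z, IsUnit (h z)) ∧
      ∀ z, z ≠ 0 → f z = g z * (Matrix.diagonal fun i => z ^ a i) * h z⁻¹ := by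
  simp only [← differentiable_matrix_iff]
  constructor
  · rintro ⟨U, V, h⟩
    refine ⟨U, fun w => Ring.inverse (V w), h.differentiable_left, h.symm.differentiable_right,
      h.isUnit_left, h.symm.isUnit_right, fun z hz => ?_⟩
    rw [← diagZPow, ← h.mul_eq_mul z hz, mul_assoc, Ring.mul_inverse_cancel _ (h.isUnit_right _),
      mul_one]
  · rintro ⟨g, h, hg, hh, hgu, hhu, hf⟩
    refine ⟨g, fun w => Ring.inverse (h w), ⟨hg, hh.inverse hhu, fun z hz => ?_⟩, hgu,
      fun w => (hhu w).ringInverse⟩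
    rw [hf z hz, mul_assoc, Ring.mul_inverse_cancel _ (hhu _), mul_one, diagZPow]

end VectorBundle

/-- Grothendieck–Birkhoff. Holomorphic vector bundles on `ℂP¹` correspond to
holomorphic clutching functions `f : ℂ* → GL_r(ℂ)`; the bundle splits as
`O(a₁) ⊕ ⋯ ⊕ O(a_r)` exactly when `f` admits a Birkhoff factorization
`f(z) = g(z) · diag(z^{a₁}, …, z^{a_r}) · h(1/z)` with `g` entire and invertible on `ℂ`
(the chart at `0`) and `h` entire and invertible on `ℂ` (the chart at `∞`).
The theorem: every holomorphic clutching function admits such a factorization, and the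
decreasing sequence `a₁ ≥ ⋯ ≥ a_r` of integers is uniquely determined. -/
theorem grothendieck_birkhoff (r : ℕ) (f : ℂ → Matrix (Fin r) (Fin r) ℂ)
    (hf : ∀ i j, DifferentiableOn ℂ (fun z => f z i j) {(0 : ℂ)}ᶜ)
    (hfinv : ∀ z : ℂ, z ≠ 0 → IsUnit (f z)) :
    ∃! a : Fin r → ℤ,
      (∀ i j : Fin r, i ≤ j → a j ≤ a i) ∧
      ∃ g h : ℂ → Matrix (Fin r) (Fin r) ℂ,
        (∀ i j, Differentiable ℂ (fun z => g z i j)) ∧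
        (∀ i j, Differentiable ℂ (fun z => h z i j)) ∧
        (∀ z : ℂ, IsUnit (g z)) ∧ (∀ z : ℂ, IsUnit (h z)) ∧
        (∀ z : ℂ, z ≠ 0 →
          f z = g z * Matrix.diagonal (fun i => z ^ (a i)) * h z⁻¹) := by
  simp_rw [← exists_isBundleIso_diagZPow_iff]
  obtain ⟨a, ha, U, V, h⟩ :=
    IsClutching.exists_antitone_isBundleIso (isClutching_matrix_iff.2 ⟨hf, hfinv⟩)
  exact ⟨a, ⟨ha, U, V, h⟩, fun b ⟨hb, U', V', h'⟩ => h'.eq_of_antitone h hb ha⟩
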